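/- Let n ≥ 1, a ∈ (−1,1). For X₁ = (x₁,y₁) ∈ ℝⁿ × [0,∞), X = (x,y) ∈ ℝⁿ × (0,∞), and t > 0, define 𝒢(X₁,X,t) = p(x₁,x,t) · p^{(a)}(y₁,y,t), where p(x₁,x,t) = (4πt)^{−n/2} e^{−|x₁−x|²/(4t)} and p^{(a)}(y₁,y,t) = (2t)^{−(1+a)/2} e^{−(y₁²+y²)/(4t)} Σ_{k=0}^∞ [2^{(1−a)/2} (y₁ y/(4t))^{2k}] / [k! Γ(k + (a+1)/2)]. Then for every X₁ ∈ ℝⁿ × [0,∞) and every t > 0, ∫_{ℝⁿ × (0,∞)} 𝒢(X₁,X,t) y^a dX = 1. -/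

import Mathlib

open MeasureTheory

/-!
The kernel is a product, so the integral factors. The Gauss–Weierstrass factor has mass one by the
Gaussian integral and translation invariance. For the Bessel factor, all terms of the series are
nonnegative on `y > 0`, so it may be integrated term by term: since
`∫₀^∞ y^(2k+a) e^(-y²/(4t)) dy = (1/2) (4t)^(k+(a+1)/2) Γ(k+(a+1)/2)`, the Gamma factors cancel and the
`k`-th term contributes `e^(-s) s^k / k!` with `s = y₁²/(4t)`; these are Poisson weights, with sum one.
-/

/-- The Gauss–Weierstrass kernel `p(x₁,x,t) = (4πt)^{-n/2} e^{-|x₁-x|²/(4t)}`. -/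
noncomputable def gaussKernel' {n : ℕ} (x₁ x : EuclideanSpace ℝ (Fin n)) (t : ℝ) : ℝ :=
  (4 * Real.pi * t) ^ (-(n : ℝ) / 2) * Real.exp (-‖x₁ - x‖ ^ 2 / (4 * t))

/-- The Bessel heat kernel with Neumann condition. -/
noncomputable def besselHeatKernel (a y₁ y t : ℝ) : ℝ :=
  (2 * t) ^ (-(1 + a) / 2) * Real.exp (-(y₁ ^ 2 + y ^ 2) / (4 * t)) *
    ∑' k : ℕ, (2 : ℝ) ^ ((1 - a) / 2) * (y₁ * y / (4 * t)) ^ (2 * k) /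
      (k.factorial * Real.Gamma ((k : ℝ) + (a + 1) / 2))

lemma integral_gaussKernel' {n : ℕ} (x₁ : EuclideanSpace ℝ (Fin n)) {t : ℝ} (ht : 0 < t) :
    ∫ x, gaussKernel' x₁ x t = 1 := by
  have h4 : 0 < (4 * t)⁻¹ := by positivity
  have hpi : 0 < 4 * Real.pi * t := by positivity
  have h := GaussianFourier.integral_rexp_neg_mul_sq_norm (V := EuclideanSpace ℝ (Fin n)) h4
  rw [finrank_euclideanSpace_fin] at h
  unfold gaussKernel'
  rw [integral_const_mul,
    integral_sub_left_eq_self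
      (fun x : EuclideanSpace ℝ (Fin n) => Real.exp (-‖x‖ ^ 2 / (4 * t))) volume x₁]
  have e : (fun x : EuclideanSpace ℝ (Fin n) => Real.exp (-‖x‖ ^ 2 / (4 * t)))
      = fun x => Real.exp (-(4 * t)⁻¹ * ‖x‖ ^ 2) := by
    funext x; congr 1; field_simp
  rw [e, h, show Real.pi / (4 * t)⁻¹ = 4 * Real.pi * t by field_simp, ← Real.rpow_add hpi,
    show -(n : ℝ) / 2 + n / 2 = 0 by ring, Real.rpow_zero]

/-- The `k`-th term of the series of `besselHeatKernel a y₁ y t * y ^ a`, with the powers of `y`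
collected. -/
noncomputable def besselTerm (a y₁ t : ℝ) (k : ℕ) (y : ℝ) : ℝ :=
  ((2 * t) ^ (-(1 + a) / 2) * Real.exp (-(y₁ ^ 2 / (4 * t))) * 2 ^ ((1 - a) / 2) *
    (y₁ / (4 * t)) ^ (2 * k) / (k.factorial * Real.Gamma ((k : ℝ) + (a + 1) / 2))) *
    (y ^ (2 * k + a) * Real.exp (-(4 * t)⁻¹ * y ^ 2))

lemma besselHeatKernel_mul_rpow_eq_tsum {a y₁ t y : ℝ} (hy : 0 < y) :
    besselHeatKernel a y₁ y t * y ^ a = ∑' k, besselTerm a y₁ t k y := by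
  unfold besselHeatKernel besselTerm
  rw [← tsum_mul_left, ← tsum_mul_right]
  refine tsum_congr fun k => ?_
  have e1 : -(y₁ ^ 2 + y ^ 2) / (4 * t) = -(y₁ ^ 2 / (4 * t)) + -(4 * t)⁻¹ * y ^ 2 := by ring
  have e2 : y ^ (2 * (k : ℝ) + a) = y ^ (2 * k) * y ^ a := by
    rw [Real.rpow_add hy, ← Real.rpow_natCast y (2 * k)]; push_cast; rfl
  rw [e1, Real.exp_add, e2]
  ring

lemma besselTerm_nonneg {a y₁ t y : ℝ} (ha : -1 < a) (ht : 0 < t) (k : ℕ) (hy : 0 < y) :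
    0 ≤ besselTerm a y₁ t k y := by
  have hG : 0 < Real.Gamma ((k : ℝ) + (a + 1) / 2) :=
    Real.Gamma_pos_of_pos (by have := k.cast_nonneg (α := ℝ); linarith)
  have hp : 0 ≤ (y₁ / (4 * t)) ^ (2 * k) := (even_two_mul k).pow_nonneg _
  unfold besselTerm
  positivity

lemma integrableOn_besselTerm {a t : ℝ} (y₁ : ℝ) (ha : -1 < a) (ht : 0 < t) (k : ℕ) :
    IntegrableOn (besselTerm a y₁ t k) (Set.Ioi 0) := by
  refine Integrable.const_mul
    (integrableOn_rpow_mul_exp_neg_mul_sq (b := (4 * t)⁻¹) (by positivity) ?_) _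
  have := k.cast_nonneg (α := ℝ); linarith

lemma integral_besselTerm {a t : ℝ} (y₁ : ℝ) (ha : -1 < a) (ht : 0 < t) (k : ℕ) :
    ∫ y in Set.Ioi 0, besselTerm a y₁ t k y =
      Real.exp (-(y₁ ^ 2 / (4 * t))) * ((y₁ ^ 2 / (4 * t)) ^ k / k.factorial) := by
  have hk := k.cast_nonneg (α := ℝ)
  have hG : 0 < Real.Gamma ((k : ℝ) + (a + 1) / 2) := Real.Gamma_pos_of_pos (by linarith)
  have hI := integral_rpow_mul_exp_neg_mul_rpow (p := 2) (q := 2 * k + a) (b := (4 * t)⁻¹)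
    (by norm_num) (by linarith) (by positivity)
  simp only [Real.rpow_two] at hI
  have h4 : ((4 * t)⁻¹ : ℝ) ^ (-(2 * (k : ℝ) + a + 1) / 2)
      = (4 * t) ^ k * (2 ^ ((1 + a) / 2) * (2 * t) ^ ((1 + a) / 2)) := by
    rw [Real.inv_rpow (by positivity), ← Real.rpow_neg (by positivity),
      show -(-(2 * (k : ℝ) + a + 1) / 2) = k + (1 + a) / 2 by ring,
      Real.rpow_add (by positivity), Real.rpow_natCast,
      ← Real.mul_rpow (by positivity) (by positivity)]
    ring_nf
  have h2 : (2 : ℝ) ^ ((1 - a) / 2) * 2 ^ ((1 + a) / 2) = 2 := by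
    rw [← Real.rpow_add (by norm_num), show (1 - a) / 2 + (1 + a) / 2 = 1 by ring, Real.rpow_one]
  have ht2 : (2 * t) ^ (-(1 + a) / 2) * (2 * t) ^ ((1 + a) / 2) = 1 := by
    rw [← Real.rpow_add (by positivity), show -(1 + a) / 2 + (1 + a) / 2 = 0 by ring,
      Real.rpow_zero]
  have hy : (y₁ / (4 * t)) ^ (2 * k) * (4 * t) ^ k = (y₁ ^ 2 / (4 * t)) ^ k := by
    rw [pow_mul, ← mul_pow]; congr 1; field_simp
  unfold besselTerm
  rw [integral_const_mul, hI, h4, show (2 * (k : ℝ) + a + 1) / 2 = k + (a + 1) / 2 by ring, ← hy]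
  generalize Real.Gamma ((k : ℝ) + (a + 1) / 2) = G at *
  calc _ = ((2 * t) ^ (-(1 + a) / 2) * (2 * t) ^ ((1 + a) / 2)) *
        ((2 : ℝ) ^ ((1 - a) / 2) * 2 ^ ((1 + a) / 2)) * (1 / 2) * (G / G) *
        (Real.exp (-(y₁ ^ 2 / (4 * t))) *
          ((y₁ / (4 * t)) ^ (2 * k) * (4 * t) ^ k / k.factorial)) := by
        field_simp
    _ = _ := by rw [ht2, h2, div_self hG.ne']; ring

lemma integral_besselHeatKernel {a t : ℝ} (y₁ : ℝ) (ha : -1 < a) (ht : 0 < t) :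
    ∫ y in Set.Ioi 0, besselHeatKernel a y₁ y t * y ^ a = 1 := by
  have hP : HasSum (fun k : ℕ => Real.exp (-(y₁ ^ 2 / (4 * t))) *
      ((y₁ ^ 2 / (4 * t)) ^ k / k.factorial)) 1 := by
    have h := (NormedSpace.expSeries_div_hasSum_exp (y₁ ^ 2 / (4 * t))).mul_left
      (Real.exp (-(y₁ ^ 2 / (4 * t))))
    rwa [← Real.exp_eq_exp_ℝ, ← Real.exp_add, neg_add_cancel, Real.exp_zero] at h
  have hnorm (k : ℕ) : ∫ y in Set.Ioi 0, ‖besselTerm a y₁ t k y‖ =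
      Real.exp (-(y₁ ^ 2 / (4 * t))) * ((y₁ ^ 2 / (4 * t)) ^ k / k.factorial) := by
    rw [← integral_besselTerm y₁ ha ht k]
    exact setIntegral_congr_fun measurableSet_Ioi fun y hy =>
      Real.norm_of_nonneg (besselTerm_nonneg ha ht k hy)
  have hS := hasSum_integral_of_summable_integral_norm
    (fun k => integrableOn_besselTerm y₁ ha ht k) (by simpa only [hnorm] using hP.summable)
  simp only [integral_besselTerm y₁ ha ht] at hS
  rw [setIntegral_congr_fun measurableSet_Ioi fun y hy => besselHeatKernel_mul_rpow_eq_tsum hy]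
  exact hS.unique hP

/-- stochastic completeness of the degenerate semigroup: for every
`X₁ = (x₁,y₁) ∈ ℝⁿ × [0,∞)` and `t > 0`,
`∫_{ℝⁿ × (0,∞)} 𝒢(X₁,X,t) y^a dX = 1`, where `𝒢(X₁,X,t) = p(x₁,x,t) p^{(a)}(y₁,y,t)`. -/
theorem degenerate_heat_kernel_stochastically_complete
    (n : ℕ) (hn : 1 ≤ n) (a : ℝ) (ha : a ∈ Set.Ioo (-1 : ℝ) 1)
    (x₁ : EuclideanSpace ℝ (Fin n)) (y₁ : ℝ) (hy₁ : 0 ≤ y₁) (t : ℝ) (ht : 0 < t) :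
    ∫ X : EuclideanSpace ℝ (Fin n) × ℝ in Set.univ ×ˢ Set.Ioi (0 : ℝ),
        gaussKernel' x₁ X.1 t * besselHeatKernel a y₁ X.2 t * X.2 ^ a = 1 := by
  simp only [mul_assoc]
  rw [Measure.volume_eq_prod, setIntegral_prod_mul (fun x => gaussKernel' x₁ x t)
    (fun y => besselHeatKernel a y₁ y t * y ^ a), setIntegral_univ, integral_gaussKernel' x₁ ht,
    integral_besselHeatKernel y₁ ha.1 ht, one_mul]
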